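/- The uniform relative entropy of contextuality is subadditive under products: for behaviors B₁ on Υ₁ = (M₁, C₁, O) and B₂ on Υ₂ = (M₂, C₂, O) with M₁ and M₂ disjoint, E_u(B₁ ⊗ B₂) ≤ E_u(B₁) + E_u(B₂). -/

import Mathlib

/-!
If `q₁`, `q₂` are non-contextual with global sections `d₁`, `d₂`, the product distribution
`d₁ ⊗ d₂` on `O ^ (M₁ ⊕ M₂)` has marginals `q₁ γ₁ ⊗ q₂ γ₂` (`marg_joinCtx`), so it yields a
non-contextual competitor for `p₁ ⊗ p₂`. Relative entropy is additive on products of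
distributions (`DKL_prod_le`), and averaging
`D(p₁ γ₁ ‖ q₁ γ₁) + D(p₂ γ₂ ‖ q₂ γ₂)` over all pairs of contexts gives the sum of the two averages.
Taking infima over `q₁` and `q₂` yields the bound. Gibbs' inequality (`DKL_nonneg`) is what rules
out the indeterminate sum `⊤ + ⊥` in `EReal`, and it also settles the case of an empty set of
contexts, where the left-hand side is `0`.
-/

open Finset

/-- A family assigning to each context `γ` a real-valued function on joint
outcome assignments `↥γ → O`. Behaviors are such families. -/
abbrev Fam (M O : Type) : Type := (γ : Finset M) → (↥γ → O) → ℝ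

variable {M O : Type} [Fintype M] [DecidableEq M] [Fintype O] [DecidableEq O]

/-- `p` is a behavior for the scenario with contexts `C`: on every context it is a
probability distribution on joint outcomes. -/
def IsBehavior (C : Finset (Finset M)) (p : Fam M O) : Prop :=
  ∀ γ ∈ C, (∀ s, 0 ≤ p γ s) ∧ ∑ s, p γ s = 1

/-- Marginal of a global distribution `d` on `O^M` on the context `γ`. -/
def marg (γ : Finset M) (d : (M → O) → ℝ) (s : ↥γ → O) : ℝ :=
  ∑ f : M → O, if (fun x : ↥γ => f x.1) = s then d f else 0

/-- A behavior is non-contextual when it admits a global section: a probability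
distribution on `O^M` marginalizing to `p γ` on every context `γ ∈ C`. -/
def NonContextual (C : Finset (Finset M)) (p : Fam M O) : Prop :=
  ∃ d : (M → O) → ℝ, (∀ f, 0 ≤ d f) ∧ (∑ f, d f = 1) ∧
    ∀ γ ∈ C, ∀ s, p γ s = marg γ d s

/-- Kullback–Leibler divergence, valued in `EReal`, with the conventions
`0 · log (0 / q i) = 0` and `D_KL(p‖q) = ⊤` whenever `p i > 0 = q i` for some `i`. -/
noncomputable def DKL {α : Type} [Fintype α] (p q : α → ℝ) : EReal :=
  ∑ i, if p i = 0 then (0 : EReal) else if q i = 0 then (⊤ : EReal)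
       else ((p i * Real.log (p i / q i) : ℝ) : EReal)

/-- The uniform relative entropy of contextuality. -/
noncomputable def Eu (C : Finset (Finset M)) (p : Fam M O) : EReal :=
  (((C.card : ℝ)⁻¹ : ℝ) : EReal) *
    ⨅ q ∈ {q : Fam M O | IsBehavior C q ∧ NonContextual C q},
      ∑ γ ∈ C, DKL (p γ) (q γ)

variable {M₁ M₂ : Type} [Fintype M₁] [DecidableEq M₁] [Fintype M₂] [DecidableEq M₂]

/-- Embedding of the first set of measurements into the disjoint union. -/
def inlEmb (M₁ M₂ : Type) : M₁ ↪ M₁ ⊕ M₂ := ⟨Sum.inl, Sum.inl_injective⟩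

/-- Embedding of the second set of measurements into the disjoint union. -/
def inrEmb (M₁ M₂ : Type) : M₂ ↪ M₁ ⊕ M₂ := ⟨Sum.inr, Sum.inr_injective⟩

/-- The context `γ₁ ∪ γ₂` inside the disjoint union of measurements. -/
def joinCtx (γ₁ : Finset M₁) (γ₂ : Finset M₂) : Finset (M₁ ⊕ M₂) :=
  γ₁.map (inlEmb M₁ M₂) ∪ γ₂.map (inrEmb M₁ M₂)

/-- Contexts of the product scenario: `{γ₁ ∪ γ₂ : γ₁ ∈ C₁, γ₂ ∈ C₂}`. -/
def prodC (C₁ : Finset (Finset M₁)) (C₂ : Finset (Finset M₂)) : Finset (Finset (M₁ ⊕ M₂)) :=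
  (C₁ ×ˢ C₂).image fun gg => joinCtx gg.1 gg.2

/-- Contexts of the controlled-choice scenario: `C₁ ∪ C₂`. -/
def ccC (C₁ : Finset (Finset M₁)) (C₂ : Finset (Finset M₂)) : Finset (Finset (M₁ ⊕ M₂)) :=
  C₁.image (fun γ => γ.map (inlEmb M₁ M₂)) ∪ C₂.image (fun γ => γ.map (inrEmb M₁ M₂))

/-- Restriction of a joint outcome assignment on `γ₁ ∪ γ₂` to `γ₁`. -/
def restr1 (γ₁ : Finset M₁) (γ₂ : Finset M₂) (s : ↥(joinCtx γ₁ γ₂) → O) : ↥γ₁ → O :=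
  fun x => s ⟨Sum.inl x.1, Finset.mem_union_left _ (Finset.mem_map_of_mem _ x.2)⟩

/-- Restriction of a joint outcome assignment on `γ₁ ∪ γ₂` to `γ₂`. -/
def restr2 (γ₁ : Finset M₁) (γ₂ : Finset M₂) (s : ↥(joinCtx γ₁ γ₂) → O) : ↥γ₂ → O :=
  fun x => s ⟨Sum.inr x.1, Finset.mem_union_right _ (Finset.mem_map_of_mem _ x.2)⟩

/-- Identification of outcome assignments on the copy of `γ ∈ C₁` inside `M₁ ⊕ M₂`
with outcome assignments on `γ`. -/
def restrL (γ : Finset M₁) (s : ↥(γ.map (inlEmb M₁ M₂)) → O) : ↥γ → O :=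
  fun x => s ⟨Sum.inl x.1, Finset.mem_map_of_mem _ x.2⟩

/-- Identification of outcome assignments on the copy of `γ ∈ C₂` inside `M₁ ⊕ M₂`
with outcome assignments on `γ`. -/
def restrR (γ : Finset M₂) (s : ↥(γ.map (inrEmb M₁ M₂)) → O) : ↥γ → O :=
  fun x => s ⟨Sum.inr x.1, Finset.mem_map_of_mem _ x.2⟩

/-! ### Relative entropy: Gibbs' inequality and additivity on products -/

/-- Under absolute continuity the divergence is the real sum; the summands with `p i = 0` vanish
there as well. -/
lemma DKL_eq_coe {α : Type} [Fintype α] {p q : α → ℝ} (h : ∀ i, p i ≠ 0 → q i ≠ 0) :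
    DKL p q = ((∑ i, p i * Real.log (p i / q i) : ℝ) : EReal) := by
  classical
  have coe_sum : ∀ (s : Finset α) (f : α → ℝ),
      ((∑ i ∈ s, f i : ℝ) : EReal) = ∑ i ∈ s, (f i : EReal) := fun s f =>
    map_sum (⟨⟨Real.toEReal, EReal.coe_zero⟩, EReal.coe_add⟩ : ℝ →+ EReal) f s
  rw [coe_sum]
  refine Finset.sum_congr rfl fun i _ => ?_
  by_cases hp : p i = 0
  · simp [hp]
  · simp [hp, h i hp]

lemma EReal_sum_ne_bot {ι : Type*} (s : Finset ι) (f : ι → EReal) (h : ∀ i ∈ s, f i ≠ ⊥) :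
    ∑ i ∈ s, f i ≠ ⊥ := by
  classical
  induction s using Finset.induction_on with
  | empty => simp
  | insert a s ha ih =>
    rw [Finset.sum_insert ha]
    exact EReal.add_ne_bot_iff.2 ⟨h a (by simp), ih fun i hi => h i (by simp [hi])⟩

lemma DKL_eq_top {α : Type} [Fintype α] {p q : α → ℝ} {i : α} (hp : p i ≠ 0) (hq : q i = 0) :
    DKL p q = ⊤ := by
  classical
  unfold DKL
  rw [← Finset.add_sum_erase _ _ (Finset.mem_univ i)]
  simp only [hp, hq, if_true, if_false]
  refine EReal.top_add_of_ne_bot (EReal_sum_ne_bot _ _ fun j _ => ?_)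
  split_ifs
  exacts [EReal.zero_ne_bot, top_ne_bot, EReal.coe_ne_bot _]

/-- Gibbs' inequality: summing `p - q ≤ p * log (p / q)` over all outcomes. -/
lemma DKL_nonneg {α : Type} [Fintype α] {p q : α → ℝ} (hp : ∀ i, 0 ≤ p i) (hq : ∀ i, 0 ≤ q i)
    (hp1 : ∑ i, p i = 1) (hq1 : ∑ i, q i = 1) : 0 ≤ DKL p q := by
  by_cases h : ∀ i, p i ≠ 0 → q i ≠ 0
  · rw [DKL_eq_coe h]
    have key : ∀ i, p i - q i ≤ p i * Real.log (p i / q i) := by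
      intro i
      rcases (hp i).eq_or_lt with h0 | h0
      · simp [← h0, hq i]
      · have hq0 : 0 < q i := lt_of_le_of_ne (hq i) (h i h0.ne').symm
        have hlog := Real.one_sub_inv_le_log_of_pos (div_pos h0 hq0)
        calc p i - q i = p i * (1 - (p i / q i)⁻¹) := by field_simp
          _ ≤ _ := mul_le_mul_of_nonneg_left hlog h0.le
    have := Finset.sum_le_sum fun i (_ : i ∈ Finset.univ) => key i
    rw [Finset.sum_sub_distrib, hp1, hq1, sub_self] at this
    exact_mod_cast this
  · push Not at h
    obtain ⟨i, hi, hi'⟩ := h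
    simp [DKL_eq_top hi hi']

/-- Only the inequality is needed; it is an equality, since `log` turns products into sums. -/
lemma DKL_prod_le {α β : Type} [Fintype α] [Fintype β] {p q : α → ℝ} {p' q' : β → ℝ}
    (hp1 : ∑ i, p i = 1) (hp1' : ∑ i, p' i = 1)
    (h0 : 0 ≤ DKL p q) (h0' : 0 ≤ DKL p' q') :
    DKL (fun x : α × β => p x.1 * p' x.2) (fun x => q x.1 * q' x.2) ≤ DKL p q + DKL p' q' := by
  by_cases h : ∀ i, p i ≠ 0 → q i ≠ 0
  swap
  · push Not at h
    obtain ⟨i, hi, hi'⟩ := h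
    rw [DKL_eq_top hi hi', EReal.top_add_of_ne_bot (ne_bot_of_le_ne_bot (by simp) h0')]
    exact le_top
  by_cases h' : ∀ i, p' i ≠ 0 → q' i ≠ 0
  swap
  · push Not at h'
    obtain ⟨i, hi, hi'⟩ := h'
    rw [DKL_eq_top hi hi', EReal.add_top_of_ne_bot (ne_bot_of_le_ne_bot (by simp) h0)]
    exact le_top
  rw [DKL_eq_coe h, DKL_eq_coe h', DKL_eq_coe (fun x hx =>
    mul_ne_zero (h _ (left_ne_zero_of_mul hx)) (h' _ (right_ne_zero_of_mul hx))), ← EReal.coe_add]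
  refine le_of_eq (congrArg _ ?_)
  have key : ∀ (a : α) (b : β), p a * p' b * Real.log (p a * p' b / (q a * q' b)) =
      p a * Real.log (p a / q a) * p' b + p a * (p' b * Real.log (p' b / q' b)) := by
    intro a b
    by_cases ha : p a = 0
    · simp [ha]
    by_cases hb : p' b = 0
    · simp [hb]
    rw [mul_div_mul_comm, Real.log_mul (div_ne_zero ha (h a ha)) (div_ne_zero hb (h' b hb))]
    ring
  rw [Fintype.sum_prod_type]
  simp only [key, Finset.sum_add_distrib, ← Finset.mul_sum, ← Finset.sum_mul, hp1, hp1',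
    one_mul, mul_one]

lemma DKL_comp_equiv {α β : Type} [Fintype α] [Fintype β] (e : α ≃ β) (p q : β → ℝ) :
    DKL (fun a => p (e a)) (fun a => q (e a)) = DKL p q :=
  e.sum_comp fun i => if p i = 0 then (0 : EReal) else if q i = 0 then (⊤ : EReal)
       else ((p i * Real.log (p i / q i) : ℝ) : EReal)

/-! ### Marginals of product distributions -/

lemma marg_nonneg (γ : Finset M) {d : (M → O) → ℝ} (hd : ∀ f, 0 ≤ d f) (s : ↥γ → O) :
    0 ≤ marg γ d s :=
  Finset.sum_nonneg fun f _ => by split_ifs <;> simp [hd f]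

lemma sum_marg (γ : Finset M) (d : (M → O) → ℝ) : ∑ s, marg γ d s = ∑ f, d f := by
  unfold marg
  rw [Finset.sum_comm]
  simp

/-- Joint assignments on `γ₁ ∪ γ₂` are pairs of assignments on `γ₁` and `γ₂`. -/
def joinEquiv (O : Type) (γ₁ : Finset M₁) (γ₂ : Finset M₂) :
    (↥(joinCtx γ₁ γ₂) → O) ≃ (↥γ₁ → O) × (↥γ₂ → O) where
  toFun s := (restr1 γ₁ γ₂ s, restr2 γ₁ γ₂ s)
  invFun t x := match x with
    | ⟨Sum.inl a, h⟩ => t.1 ⟨a, by simpa [joinCtx, inlEmb, inrEmb] using h⟩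
    | ⟨Sum.inr b, h⟩ => t.2 ⟨b, by simpa [joinCtx, inlEmb, inrEmb] using h⟩
  left_inv s := by
    funext x
    rcases x with ⟨a | b, h⟩ <;> rfl
  right_inv t := rfl

lemma joinCtx_injective :
    Function.Injective fun gg : Finset M₁ × Finset M₂ => joinCtx gg.1 gg.2 := by
  rintro ⟨a, b⟩ ⟨a', b'⟩ h
  have h1 : ∀ x : M₁, x ∈ a ↔ x ∈ a' := fun x => by
    simpa [joinCtx, inlEmb, inrEmb] using Finset.ext_iff.1 h (Sum.inl x)
  have h2 : ∀ x : M₂, x ∈ b ↔ x ∈ b' := fun x => by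
    simpa [joinCtx, inlEmb, inrEmb] using Finset.ext_iff.1 h (Sum.inr x)
  exact Prod.ext (Finset.ext h1) (Finset.ext h2)

/-- The product of two global distributions, on assignments to the disjoint union. -/
def prodDist (d₁ : (M₁ → O) → ℝ) (d₂ : (M₂ → O) → ℝ) (f : M₁ ⊕ M₂ → O) : ℝ :=
  d₁ (fun x => f (Sum.inl x)) * d₂ (fun x => f (Sum.inr x))

lemma sum_prodDist (d₁ : (M₁ → O) → ℝ) (d₂ : (M₂ → O) → ℝ) :
    ∑ f, prodDist d₁ d₂ f = (∑ f, d₁ f) * ∑ f, d₂ f := by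
  rw [Finset.sum_mul_sum, ← Fintype.sum_prod_type',
    ← (Equiv.sumArrowEquivProdArrow M₁ M₂ O).sum_comp]
  rfl

lemma marg_joinCtx (d₁ : (M₁ → O) → ℝ) (d₂ : (M₂ → O) → ℝ) (γ₁ : Finset M₁) (γ₂ : Finset M₂)
    (s : ↥(joinCtx γ₁ γ₂) → O) :
    marg (joinCtx γ₁ γ₂) (prodDist d₁ d₂) s =
      marg γ₁ d₁ (restr1 γ₁ γ₂ s) * marg γ₂ d₂ (restr2 γ₁ γ₂ s) := by
  unfold marg
  rw [Finset.sum_mul_sum, ← Fintype.sum_prod_type',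
    ← (Equiv.sumArrowEquivProdArrow M₁ M₂ O).sum_comp]
  refine Finset.sum_congr rfl fun f _ => ?_
  have hiff : (fun x : ↥(joinCtx γ₁ γ₂) => f x.1) = s ↔
      (fun x : ↥γ₁ => f (Sum.inl x.1)) = restr1 γ₁ γ₂ s ∧
      (fun x : ↥γ₂ => f (Sum.inr x.1)) = restr2 γ₁ γ₂ s := by
    rw [← (joinEquiv O γ₁ γ₂).injective.eq_iff, Prod.ext_iff]
    rfl
  change _ = (if (fun x : ↥γ₁ => f (Sum.inl x.1)) = restr1 γ₁ γ₂ s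
      then d₁ (fun x => f (Sum.inl x)) else 0) *
    (if (fun x : ↥γ₂ => f (Sum.inr x.1)) = restr2 γ₁ γ₂ s
      then d₂ (fun x => f (Sum.inr x)) else 0)
  rw [ite_zero_mul_ite_zero]
  simp only [hiff]
  rfl

/-! ### The infimum and the average over contexts -/

lemma sum_DKL_nonneg {C : Finset (Finset M)} {p q : Fam M O} (hp : IsBehavior C p)
    (hq : IsBehavior C q) : 0 ≤ ∑ γ ∈ C, DKL (p γ) (q γ) :=
  Finset.sum_nonneg fun γ hγ =>
    DKL_nonneg (hp γ hγ).1 (hq γ hγ).1 (hp γ hγ).2 (hq γ hγ).2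

lemma Eu_nonneg {C : Finset (Finset M)} {p : Fam M O} (hp : IsBehavior C p) : 0 ≤ Eu C p :=
  mul_nonneg (by exact_mod_cast inv_nonneg.2 (Nat.cast_nonneg C.card))
    (le_iInf₂ fun _ hq => sum_DKL_nonneg hp hq.1)

lemma Eu_of_card_eq_zero {C : Finset (Finset M)} (h : C.card = 0) (p : Fam M O) :
    Eu C p = 0 := by
  simp [Eu, h]

lemma exists_of_Eu_lt {C : Finset (Finset M)} (hC : C.card ≠ 0) {p : Fam M O} {x : EReal}
    (hx : Eu C p < x) : ∃ q, IsBehavior C q ∧ NonContextual C q ∧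
      (((C.card : ℝ)⁻¹ : ℝ) : EReal) * ∑ γ ∈ C, DKL (p γ) (q γ) < x := by
  by_contra! hcon
  have hr : (0 : EReal) < (((C.card : ℝ)⁻¹ : ℝ) : EReal) := by
    exact_mod_cast inv_pos.2 (Nat.cast_pos.2 (Nat.pos_of_ne_zero hC))
  refine hx.not_ge ((EReal.div_le_iff_le_mul hr (EReal.coe_ne_top _)).1 ?_)
  exact le_iInf₂ fun q hq => (EReal.div_le_iff_le_mul hr (EReal.coe_ne_top _)).2 (hcon q hq.1 hq.2)

/-- Averaging `D₁ i + D₂ j` over all pairs gives the sum of the averages. Finite sums of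
nonnegative extended reals are either real or `⊤`. -/
lemma average_add {S T : EReal} (hS : 0 ≤ S) (hT : 0 ≤ T) {a b : ℕ} (ha : a ≠ 0) (hb : b ≠ 0) :
    ((((a * b : ℕ) : ℝ)⁻¹ : ℝ) : EReal) * (b • S + a • T) ≤
      (((a : ℝ)⁻¹ : ℝ) : EReal) * S + (((b : ℝ)⁻¹ : ℝ) : EReal) * T := by
  have ha' : (0 : ℝ) < a := Nat.cast_pos.2 (Nat.pos_of_ne_zero ha)
  have hb' : (0 : ℝ) < b := Nat.cast_pos.2 (Nat.pos_of_ne_zero hb)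
  have hA : 0 ≤ (((a : ℝ)⁻¹ : ℝ) : EReal) := by exact_mod_cast (inv_pos.2 ha').le
  have hB : 0 ≤ (((b : ℝ)⁻¹ : ℝ) : EReal) := by exact_mod_cast (inv_pos.2 hb').le
  rcases eq_or_ne S ⊤ with rfl | hS'
  · rw [EReal.coe_mul_top_of_pos (inv_pos.2 ha'),
      EReal.top_add_of_ne_bot (ne_bot_of_le_ne_bot (by simp) (mul_nonneg hB hT))]
    exact le_top
  rcases eq_or_ne T ⊤ with rfl | hT'
  · rw [EReal.coe_mul_top_of_pos (inv_pos.2 hb'),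
      EReal.add_top_of_ne_bot (ne_bot_of_le_ne_bot (by simp) (mul_nonneg hA hS))]
    exact le_top
  lift S to ℝ using ⟨hS', ne_bot_of_le_ne_bot (by simp) hS⟩
  lift T to ℝ using ⟨hT', ne_bot_of_le_ne_bot (by simp) hT⟩
  rw [← EReal.coe_nsmul, ← EReal.coe_nsmul, ← EReal.coe_add, ← EReal.coe_mul, ← EReal.coe_mul,
    ← EReal.coe_mul, ← EReal.coe_add]
  refine le_of_eq (congrArg _ ?_)
  push_cast
  simp only [nsmul_eq_mul]
  field_simp

/-- Subadditivity of the uniform relative entropy of contextuality under products. -/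
theorem eu_product_subadditive
    (C₁ : Finset (Finset M₁)) (C₂ : Finset (Finset M₂))
    (p₁ : Fam M₁ O) (p₂ : Fam M₂ O) (p12 : Fam (M₁ ⊕ M₂) O)
    (h₁ : IsBehavior C₁ p₁) (h₂ : IsBehavior C₂ p₂)
    (h12 : ∀ γ₁ ∈ C₁, ∀ γ₂ ∈ C₂, ∀ s : ↥(joinCtx γ₁ γ₂) → O,
      p12 (joinCtx γ₁ γ₂) s = p₁ γ₁ (restr1 γ₁ γ₂ s) * p₂ γ₂ (restr2 γ₁ γ₂ s)) :
    Eu (prodC C₁ C₂) p12 ≤ Eu C₁ p₁ + Eu C₂ p₂ := by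
  have hcard : (prodC C₁ C₂).card = C₁.card * C₂.card := by
    rw [prodC, Finset.card_image_of_injective _ joinCtx_injective, Finset.card_product]
  have n₁ := Eu_nonneg h₁
  have n₂ := Eu_nonneg h₂
  rcases eq_or_ne C₁.card 0 with c₁ | c₁
  · rw [Eu_of_card_eq_zero (by rw [hcard, c₁, zero_mul])]
    exact add_nonneg n₁ n₂
  rcases eq_or_ne C₂.card 0 with c₂ | c₂
  · rw [Eu_of_card_eq_zero (by rw [hcard, c₂, mul_zero])]
    exact add_nonneg n₁ n₂
  refine EReal.le_add_of_forall_gt (Or.inl (ne_bot_of_le_ne_bot (by simp) n₁))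
    (Or.inr (ne_bot_of_le_ne_bot (by simp) n₂)) fun x₁ hx₁ x₂ hx₂ => ?_
  obtain ⟨q₁, b₁, ⟨d₁, dn₁, ds₁, dm₁⟩, hq₁⟩ := exists_of_Eu_lt c₁ hx₁
  obtain ⟨q₂, b₂, ⟨d₂, dn₂, ds₂, dm₂⟩, hq₂⟩ := exists_of_Eu_lt c₂ hx₂
  refine le_trans ?_ (add_le_add hq₁.le hq₂.le)
  refine le_trans ?_ (average_add (sum_DKL_nonneg h₁ b₁) (sum_DKL_nonneg h₂ b₂) c₁ c₂)
  have dn : ∀ f, 0 ≤ prodDist d₁ d₂ f := fun f => mul_nonneg (dn₁ _) (dn₂ _)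
  have ds : ∑ f, prodDist d₁ d₂ f = 1 := by rw [sum_prodDist, ds₁, ds₂, one_mul]
  rw [Eu, hcard]
  refine mul_le_mul_of_nonneg_left ?_
    (by exact_mod_cast inv_nonneg.2 (Nat.cast_nonneg (C₁.card * C₂.card)))
  refine (iInf₂_le (fun γ s => marg γ (prodDist d₁ d₂) s)
    ⟨fun γ _ => ⟨marg_nonneg γ dn, (sum_marg γ _).trans ds⟩,
      prodDist d₁ d₂, dn, ds, fun _ _ _ => rfl⟩).trans ?_
  rw [prodC, Finset.sum_image (joinCtx_injective.injOn), Finset.sum_product]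
  have hle : ∀ γ₁ ∈ C₁, ∀ γ₂ ∈ C₂,
      DKL (p12 (joinCtx γ₁ γ₂)) (fun s => marg (joinCtx γ₁ γ₂) (prodDist d₁ d₂) s) ≤
        DKL (p₁ γ₁) (q₁ γ₁) + DKL (p₂ γ₂) (q₂ γ₂) := by
    intro γ₁ m₁ γ₂ m₂
    rw [funext (h12 γ₁ m₁ γ₂ m₂)]
    simp only [marg_joinCtx, ← dm₁ γ₁ m₁, ← dm₂ γ₂ m₂]
    exact (DKL_comp_equiv (joinEquiv O γ₁ γ₂) (fun x => p₁ γ₁ x.1 * p₂ γ₂ x.2)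
      (fun x => q₁ γ₁ x.1 * q₂ γ₂ x.2)).trans_le
      (DKL_prod_le (h₁ γ₁ m₁).2 (h₂ γ₂ m₂).2
        (DKL_nonneg (h₁ γ₁ m₁).1 (b₁ γ₁ m₁).1 (h₁ γ₁ m₁).2 (b₁ γ₁ m₁).2)
        (DKL_nonneg (h₂ γ₂ m₂).1 (b₂ γ₂ m₂).1 (h₂ γ₂ m₂).2 (b₂ γ₂ m₂).2))
  refine (Finset.sum_le_sum fun γ₁ m₁ => Finset.sum_le_sum fun γ₂ m₂ => hle γ₁ m₁ γ₂ m₂).trans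
    (le_of_eq ?_)
  simp only [Finset.sum_add_distrib, Finset.sum_const, Finset.sum_nsmul]
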